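/- Let c be a metric on X, P and Q probability measures on X with W₁(Q, P) > ρ > 0, and define the mixture Q' = (1 − u)·Q + u·P with u = 1 − ρ / W₁(Q, P). Then W₁(Q', P) = ρ and W₁(Q', Q) = W₁(Q, P) − ρ. -/

import Mathlib

open MeasureTheory ENNReal

/-- Wasserstein-1 distance between two measures, defined as the infimum over
couplings (probability measures on `X × X` with the given marginals) of the
expected distance. -/
noncomputable def W1 {X : Type*} [MeasurableSpace X] [PseudoEMetricSpace X]
    (P Q : Measure X) : ℝ≥0∞ :=
  ⨅ π ∈ {π : Measure (X × X) |
      IsProbabilityMeasure π ∧ π.map Prod.fst = P ∧ π.map Prod.snd = Q},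
    ∫⁻ p, edist p.1 p.2 ∂π

section Gluing

open ProbabilityTheory Set Filter

/-- The lower integral of an arbitrary function is a supremum of integrals of upper semicontinuous
minorants. -/
lemma exists_upperSemicontinuous_le_lt_lintegral {Ω : Type*} [TopologicalSpace Ω]
    [MeasurableSpace Ω] [BorelSpace Ω] {μ : Measure Ω} [μ.WeaklyRegular] [IsFiniteMeasure μ]
    (h : Ω → ℝ≥0∞) {r : ℝ≥0∞} (hr : r < ∫⁻ s, h s ∂μ) :
    ∃ g : Ω → NNReal, UpperSemicontinuous g ∧ (∀ s, (g s : ℝ≥0∞) ≤ h s) ∧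
      r < ∫⁻ s, g s ∂μ := by
  rw [lintegral_eq_nnreal] at hr
  simp only [lt_iSup_iff] at hr
  obtain ⟨φ, hφ, hr⟩ := hr
  rw [← SimpleFunc.lintegral_eq_lintegral] at hr
  have hfin : ∫⁻ s, (φ s : ℝ≥0∞) ∂μ ≠ ∞ := by
    obtain ⟨C, hC⟩ := φ.finite_range.bddAbove
    refine ne_top_of_le_ne_top (b := ∫⁻ _, (C : ℝ≥0∞) ∂μ) ?_ (lintegral_mono fun s ↦ ?_)
    · simp [ENNReal.mul_eq_top]
    · exact ENNReal.coe_le_coe.2 (hC (mem_range_self s))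
  have hr' : r < ∫⁻ s, (φ s : ℝ≥0∞) ∂μ := by simpa using hr
  obtain ⟨g, hgφ, hg, hle⟩ := exists_upperSemicontinuous_le_lintegral_le φ hfin
    (ε := (∫⁻ s, (φ s : ℝ≥0∞) ∂μ - r) / 2) (by simpa using (tsub_pos_of_lt hr').ne')
  refine ⟨g, hg, fun s ↦ (ENNReal.coe_le_coe.2 (hgφ s)).trans (hφ s), ?_⟩
  by_contra! hcon
  have hlt : (∫⁻ s, (φ s : ℝ≥0∞) ∂μ - r) / 2 < ∫⁻ s, (φ s : ℝ≥0∞) ∂μ - r :=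
    ENNReal.half_lt_self (tsub_pos_of_lt hr').ne' (ne_top_of_le_ne_top hfin tsub_le_self)
  have : ∫⁻ s, (φ s : ℝ≥0∞) ∂μ < ∫⁻ s, (φ s : ℝ≥0∞) ∂μ :=
    calc _ ≤ r + (∫⁻ s, (φ s : ℝ≥0∞) ∂μ - r) / 2 := hle.trans (by gcongr)
      _ < r + (∫⁻ s, (φ s : ℝ≥0∞) ∂μ - r) := ENNReal.add_lt_add_left hr'.ne_top hlt
      _ = _ := add_tsub_cancel_of_le hr'.le
  exact this.false

/-- A family of upper semicontinuous functions on a second countable space, indexed by a discrete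
measurable space, is jointly measurable. -/
lemma measurable_uncurry_of_upperSemicontinuous {I Ω : Type*} [MeasurableSpace I]
    [DiscreteMeasurableSpace I] [TopologicalSpace Ω] [SecondCountableTopology Ω]
    [MeasurableSpace Ω] [OpensMeasurableSpace Ω] {g : I → Ω → NNReal}
    (hg : ∀ i, UpperSemicontinuous (g i)) : Measurable fun p : I × Ω ↦ g p.1 p.2 := by
  refine measurable_of_Iio fun r ↦ ?_
  have heq : (fun p : I × Ω ↦ g p.1 p.2) ⁻¹' Iio r =
      ⋃ B ∈ TopologicalSpace.countableBasis Ω, {i | B ⊆ g i ⁻¹' Iio r} ×ˢ B := by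
    ext ⟨i, s⟩
    simp only [mem_preimage, mem_Iio, mem_iUnion, mem_prod, mem_ofPred_eq, exists_prop]
    constructor
    · intro hs
      obtain ⟨B, hB, hsB, hsub⟩ :=
        (TopologicalSpace.isBasis_countableBasis Ω).exists_subset_of_mem_open
          (show s ∈ g i ⁻¹' Iio r from hs)
          ((hg i).isOpen_preimage r)
      exact ⟨B, hB, hsub, hsB⟩
    · rintro ⟨B, -, hsub, hsB⟩
      exact hsub hsB
  rw [heq]
  exact .biUnion (TopologicalSpace.countable_countableBasis Ω) fun B hB ↦
    MeasurableSet.of_discrete.prod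
      (TopologicalSpace.isOpen_of_mem_countableBasis hB).measurableSet

/-- Over a discrete measurable space, iterated lower integrals of an arbitrary (possibly
non-measurable) function are bounded by the lower integral against the composition-product. -/
lemma lintegral_lintegral_le_lintegral_compProd {I Ω : Type*} [MeasurableSpace I]
    [DiscreteMeasurableSpace I] [TopologicalSpace Ω] [SecondCountableTopology Ω]
    [TopologicalSpace.PseudoMetrizableSpace Ω] [MeasurableSpace Ω] [BorelSpace Ω]
    (μ : Measure I) [SFinite μ] (κ : Kernel I Ω) [IsFiniteKernel κ] (h : I × Ω → ℝ≥0∞) :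
    ∫⁻ i, ∫⁻ s, h (i, s) ∂κ i ∂μ ≤ ∫⁻ p, h p ∂(μ ⊗ₘ κ) := by
  have hex (q : ℚ) (i : I) : ∃ g : Ω → NNReal, UpperSemicontinuous g ∧
      (∀ s, (g s : ℝ≥0∞) ≤ h (i, s)) ∧
      (ENNReal.ofReal q < ∫⁻ s, h (i, s) ∂κ i → ENNReal.ofReal q < ∫⁻ s, g s ∂κ i) := by
    by_cases hq : ENNReal.ofReal q < ∫⁻ s, h (i, s) ∂κ i
    · obtain ⟨g, hg, hgh, hlt⟩ := exists_upperSemicontinuous_le_lt_lintegral (fun s ↦ h (i, s)) hq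
      exact ⟨g, hg, hgh, fun _ ↦ hlt⟩
    · exact ⟨fun _ ↦ 0, upperSemicontinuous_const, by simp, fun hq' ↦ absurd hq' hq⟩
  choose g hg hgh hlt using hex
  have hmeas : Measurable fun p : I × Ω ↦ ⨆ q, (g q p.1 p.2 : ℝ≥0∞) :=
    .iSup fun q ↦ (measurable_uncurry_of_upperSemicontinuous (hg q)).coe_nnreal_ennreal
  calc ∫⁻ i, ∫⁻ s, h (i, s) ∂κ i ∂μ
      ≤ ∫⁻ i, ∫⁻ s, ⨆ q, (g q i s : ℝ≥0∞) ∂κ i ∂μ := by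
        refine lintegral_mono fun i ↦ le_of_forall_lt fun r hr ↦ ?_
        obtain ⟨q, -, hrq, hq⟩ := ENNReal.lt_iff_exists_rat_btwn.1 hr
        exact hrq.trans ((hlt q i hq).trans_le
          (lintegral_mono fun s ↦ le_iSup (fun q ↦ (g q i s : ℝ≥0∞)) q))
    _ = ∫⁻ p, ⨆ q, (g q p.1 p.2 : ℝ≥0∞) ∂(μ ⊗ₘ κ) :=
        (Measure.lintegral_compProd (κ := κ) hmeas).symm
    _ ≤ ∫⁻ p, h p ∂(μ ⊗ₘ κ) := lintegral_mono fun p ↦ iSup_le fun q ↦ hgh q p.1 p.2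

/-- Encoding a sequence of points of the Cantor space as one point. -/
def cantorJoin (s : ℕ → ℕ → Bool) : ℕ → Bool := fun k ↦ s k.unpair.1 k.unpair.2

/-- Recovering the `n`-th point encoded by `cantorJoin`. -/
def cantorSlice (n : ℕ) (s : ℕ → Bool) : ℕ → Bool := fun k ↦ s (Nat.pair n k)

lemma cantorSlice_cantorJoin (s : ℕ → ℕ → Bool) (n : ℕ) : cantorSlice n (cantorJoin s) = s n := by
  ext k; simp [cantorSlice, cantorJoin]

lemma measurable_cantorSlice (n : ℕ) : Measurable (cantorSlice n) :=
  measurable_pi_lambda _ fun k ↦ measurable_pi_apply (Nat.pair n k)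

lemma measurable_cantorJoin {E : Type*} [MeasurableSpace E] {a : ℕ → E → ℕ → Bool}
    (ha : ∀ n, Measurable (a n)) : Measurable fun e ↦ cantorJoin fun n ↦ a n e :=
  measurable_pi_lambda _ fun k ↦ (measurable_pi_apply k.unpair.2).comp (ha k.unpair.1)

lemma cantorSlice_comp_cantorJoin {E : Type*} (a : ℕ → E → ℕ → Bool) (n : ℕ) :
    (cantorSlice n ∘ fun e ↦ cantorJoin fun n ↦ a n e) = a n :=
  funext fun e ↦ cantorSlice_cantorJoin (fun n ↦ a n e) n

lemma measurable_cantorIndicator {E : Type*} [MeasurableSpace E] {A : Set E}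
    (hA : MeasurableSet A) [DecidablePred (· ∈ A)] :
    Measurable fun (e : E) (_ : ℕ) ↦ decide (e ∈ A) :=
  measurable_pi_lambda _ fun _ ↦ measurable_to_bool (by simpa [preimage] using hA)

/-- A sequence of sets, each pulled back from the square of the Cantor space, is simultaneously
pulled back along a single pair of maps. -/
lemma preimage_prodMap_cantorJoin {E F : Type*} (a : ℕ → E → ℕ → Bool) (b : ℕ → F → ℕ → Bool)
    (n : ℕ) (N : Set ((ℕ → Bool) × (ℕ → Bool))) :
    Prod.map (fun e ↦ cantorJoin fun n ↦ a n e) (fun f ↦ cantorJoin fun n ↦ b n f) ⁻¹'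
      (Prod.map (cantorSlice n) (cantorSlice n) ⁻¹' N) = Prod.map (a n) (b n) ⁻¹' N := by
  simp_rw [← preimage_comp, Prod.map_comp_map, cantorSlice_comp_cantorJoin]

/-- Every measurable subset of a product is pulled back from the square of the Cantor space. -/
lemma MeasurableSet.exists_preimage_prodMap_cantor {E F : Type*} [MeasurableSpace E]
    [MeasurableSpace F] {M : Set (E × F)} (hM : MeasurableSet M) :
    ∃ (a : E → ℕ → Bool) (b : F → ℕ → Bool) (N : Set ((ℕ → Bool) × (ℕ → Bool))),
      Measurable a ∧ Measurable b ∧ MeasurableSet N ∧ Prod.map a b ⁻¹' N = M := by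
  classical
  induction M, hM using MeasurableSpace.induction_on_inter generateFrom_prod.symm
    isPiSystem_prod with
  | empty => exact ⟨fun _ _ ↦ false, fun _ _ ↦ false, ∅, measurable_const, measurable_const,
      .empty, rfl⟩
  | basic t ht =>
    obtain ⟨A, hA, B, hB, rfl⟩ := ht
    refine ⟨fun e _ ↦ decide (e ∈ A), fun f _ ↦ decide (f ∈ B),
      {p | p.1 0 = true ∧ p.2 0 = true}, measurable_cantorIndicator hA,
      measurable_cantorIndicator hB, ?_, by ext; simp⟩
    exact (measurableSet_eq_fun ((measurable_pi_apply 0).comp measurable_fst)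
      measurable_const).inter (measurableSet_eq_fun ((measurable_pi_apply 0).comp measurable_snd)
      measurable_const)
  | compl t _ ih =>
    obtain ⟨a, b, N, ha, hb, hN, rfl⟩ := ih
    exact ⟨a, b, Nᶜ, ha, hb, hN.compl, rfl⟩
  | iUnion t _ _ ih =>
    choose a b N ha hb hN h using ih
    refine ⟨_, _, ⋃ n, Prod.map (cantorSlice n) (cantorSlice n) ⁻¹' N n, measurable_cantorJoin ha,
      measurable_cantorJoin hb,
      .iUnion fun n ↦ ((measurable_cantorSlice n).prodMap (measurable_cantorSlice n)) (hN n), ?_⟩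
    simp_rw [preimage_iUnion, preimage_prodMap_cantorJoin, h]

/-- Every measurable function on a product factors through the square of the Cantor space. -/
lemma Measurable.exists_eq_comp_prodMap_cantor {E F : Type*} [MeasurableSpace E]
    [MeasurableSpace F] {g : E × F → ℝ≥0∞} (hg : Measurable g) :
    ∃ (a : E → ℕ → Bool) (b : F → ℕ → Bool) (g' : (ℕ → Bool) × (ℕ → Bool) → ℝ≥0∞),
      Measurable a ∧ Measurable b ∧ Measurable g' ∧ g = g' ∘ Prod.map a b := by
  obtain ⟨t, ht⟩ := (MeasurableSpace.countable_countableGeneratingSet (α := ℝ≥0∞)).exists_eq_range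
    MeasurableSpace.nonempty_countableGeneratingSet
  have hmeas (n : ℕ) : MeasurableSet (g ⁻¹' t n) := hg
    (MeasurableSpace.measurableSet_countableGeneratingSet (ht ▸ mem_range_self n))
  choose a b N ha hb hN h using fun n ↦ (hmeas n).exists_preimage_prodMap_cantor
  have hfac : Measurable[MeasurableSpace.comap (Prod.map (fun e ↦ cantorJoin fun n ↦ a n e)
      (fun f ↦ cantorJoin fun n ↦ b n f)) inferInstance] g := by
    rw [← MeasurableSpace.generateFrom_countableGeneratingSet (α := ℝ≥0∞), ht]
    refine @measurable_generateFrom _ _ (_) _ _ ?_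
    rintro _ ⟨n, rfl⟩
    exact ⟨_, ((measurable_cantorSlice n).prodMap (measurable_cantorSlice n)) (hN n),
      (preimage_prodMap_cantorJoin a b n (N n)).trans (h n)⟩
  obtain ⟨g', hg', h⟩ := hfac.exists_eq_measurable_comp
  exact ⟨_, _, g', measurable_cantorJoin ha, measurable_cantorJoin hb, hg', h⟩

/-- If `V a b` is a family of measures on the square of the Cantor space, compatible in `a` and `b`
and concentrated on the range of `Prod.map a b`, then it comes from a measure on `E × F`. -/
lemma exists_measure_map_eq_of_compatible {E F : Type*} [MeasurableSpace E] [MeasurableSpace F]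
    (V : (E → ℕ → Bool) → (F → ℕ → Bool) → Measure ((ℕ → Bool) × (ℕ → Bool)))
    (hcomp : ∀ a b, Measurable a → Measurable b → ∀ p : (ℕ → Bool) → (ℕ → Bool), Measurable p →
      V (p ∘ a) (p ∘ b) = (V a b).map (Prod.map p p))
    (hnull : ∀ a b, Measurable a → Measurable b → ∀ N, MeasurableSet N →
      Prod.map a b ⁻¹' N = ∅ → V a b N = 0) :
    ∃ Γ : Measure (E × F), ∀ a b, Measurable a → Measurable b →
      Γ.map (Prod.map a b) = V a b := by
  have hjoin {a : ℕ → E → ℕ → Bool} {b : ℕ → F → ℕ → Bool} (ha : ∀ n, Measurable (a n))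
      (hb : ∀ n, Measurable (b n)) (n : ℕ) {N : Set ((ℕ → Bool) × (ℕ → Bool))}
      (hN : MeasurableSet N) :
      V (fun e ↦ cantorJoin fun n ↦ a n e) (fun f ↦ cantorJoin fun n ↦ b n f)
        (Prod.map (cantorSlice n) (cantorSlice n) ⁻¹' N) = V (a n) (b n) N := by
    have := hcomp _ _ (measurable_cantorJoin ha) (measurable_cantorJoin hb) _
      (measurable_cantorSlice n)
    rw [cantorSlice_comp_cantorJoin, cantorSlice_comp_cantorJoin] at this
    rw [this, Measure.map_apply
      ((measurable_cantorSlice n).prodMap (measurable_cantorSlice n)) hN]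
  have hslice (n : ℕ) : Measurable (Prod.map (cantorSlice n) (cantorSlice n)) :=
    (measurable_cantorSlice n).prodMap (measurable_cantorSlice n)
  have hsame {a b} (ha : Measurable a) (hb : Measurable b) {N N'} (hN : MeasurableSet N)
      (hN' : MeasurableSet N') (h : Prod.map a b ⁻¹' N ⊆ Prod.map a b ⁻¹' N') :
      V a b N ≤ V a b N' := by
    have h0 : V a b (N \ N') = 0 := hnull a b ha hb _ (hN.diff hN') (by
      rw [preimage_sdiff, sdiff_eq_empty.2 h])
    exact measure_mono_ae (ae_le_set.2 h0)
  have hmono {a b a' b'} (ha : Measurable a) (hb : Measurable b) (ha' : Measurable a')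
      (hb' : Measurable b') {N N'} (hN : MeasurableSet N) (hN' : MeasurableSet N')
      (h : Prod.map a b ⁻¹' N = Prod.map a' b' ⁻¹' N') : V a b N ≤ V a' b' N' := by
    let A : ℕ → E → ℕ → Bool := fun n ↦ if n = 0 then a else a'
    let B : ℕ → F → ℕ → Bool := fun n ↦ if n = 0 then b else b'
    have hA n : Measurable (A n) := by dsimp only [A]; split_ifs <;> assumption
    have hB n : Measurable (B n) := by dsimp only [B]; split_ifs <;> assumption
    have h0 := hjoin hA hB 0 hN
    have h1 := hjoin hA hB 1 hN'
    simp only [A, B, if_true, one_ne_zero, if_false] at h0 h1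
    rw [← h0, ← h1]
    refine hsame (measurable_cantorJoin hA) (measurable_cantorJoin hB) (hslice 0 hN)
      (hslice 1 hN') ?_
    rw [preimage_prodMap_cantorJoin, preimage_prodMap_cantorJoin]
    exact h.le
  choose a b N ha hb hN h using
    fun (M : Set (E × F)) (hM : MeasurableSet M) ↦ hM.exists_preimage_prodMap_cantor
  have heq {M} (hM : MeasurableSet M) {a' b' N'} (ha' : Measurable a') (hb' : Measurable b')
      (hN' : MeasurableSet N') (h' : Prod.map a' b' ⁻¹' N' = M) :
      V (a M hM) (b M hM) (N M hM) = V a' b' N' :=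
    (hmono (ha _ _) (hb _ _) ha' hb' (hN _ _) hN' ((h _ _).trans h'.symm)).antisymm
      (hmono ha' hb' (ha _ _) (hb _ _) hN' (hN _ _) (h'.trans (h _ _).symm))
  refine ⟨Measure.ofMeasurable (fun M hM ↦ V (a M hM) (b M hM) (N M hM)) ?_ ?_, ?_⟩
  · exact hnull _ _ (ha _ _) (hb _ _) _ (hN _ _) (h _ _)
  · intro M hM hdisj
    have hpre (n : ℕ) := preimage_prodMap_cantorJoin (fun n ↦ a (M n) (hM n))
      (fun n ↦ b (M n) (hM n)) n (N (M n) (hM n))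
    simp_rw [h] at hpre
    have hA := measurable_cantorJoin fun n ↦ ha (M n) (hM n)
    have hB := measurable_cantorJoin fun n ↦ hb (M n) (hM n)
    rw [heq (.iUnion hM) hA hB (.iUnion fun n ↦ hslice n (hN (M n) (hM n)))
      (by rw [preimage_iUnion]; exact iUnion_congr hpre), measure_iUnion₀]
    · exact tsum_congr fun n ↦ hjoin (fun n ↦ ha (M n) (hM n)) (fun n ↦ hb (M n) (hM n)) n
        (hN (M n) (hM n))
    · intro m n hmn
      refine hnull _ _ hA hB _ ((hslice m (hN _ _)).inter (hslice n (hN _ _))) ?_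
      rw [preimage_inter, hpre, hpre]
      exact (hdisj hmn).inter_eq
    · exact fun n ↦ (hslice n (hN _ _)).nullMeasurableSet
  · intro a' b' ha' hb'
    ext N' hN'
    rw [Measure.map_apply (ha'.prodMap hb') hN',
      Measure.ofMeasurable_apply _ (ha'.prodMap hb' hN')]
    exact heq _ ha' hb' hN' rfl

section RelativeProduct

variable {E F I : Type*} [MeasurableSpace E] [MeasurableSpace F] [MeasurableSpace I]
  {μ : Measure E} {ν : Measure F} [IsFiniteMeasure μ] [IsFiniteMeasure ν] {p : E → I} {q : F → I}

/-- Conditional expectations over a discrete measurable space do not increase lower integrals. -/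
lemma lintegral_condDistrib_iInf_le [DiscreteMeasurableSpace I]
    {a : E → ℕ → Bool} (ha : Measurable a) (c : E → ℝ≥0∞) :
    ∫⁻ i, ∫⁻ s, (⨅ (e) (_ : p e = i ∧ a e = s), c e) ∂condDistrib a p μ i ∂(μ.map p)
      ≤ ∫⁻ e, c e ∂μ := by
  refine (lintegral_lintegral_le_lintegral_compProd (μ.map p) (condDistrib a p μ)
    fun x ↦ ⨅ (e) (_ : p e = x.1 ∧ a e = x.2), c e).trans ?_
  rw [compProd_map_condDistrib ha.aemeasurable]
  exact (lintegral_map_le _ _).trans (lintegral_mono fun e ↦ iInf₂_le e ⟨rfl, rfl⟩)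

/-- The law of `(a, b)` when `E` and `F` are coupled conditionally independently given `p = q`. -/
noncomputable def condProdLaw (μ : Measure E) (ν : Measure F) [IsFiniteMeasure μ]
    [IsFiniteMeasure ν] (p : E → I) (q : F → I) (a : E → ℕ → Bool) (b : F → ℕ → Bool) :
    Measure ((ℕ → Bool) × (ℕ → Bool)) :=
  (μ.map p).bind (condDistrib a p μ ×ₖ condDistrib b q ν)

lemma lintegral_condProdLaw (a : E → ℕ → Bool) (b : F → ℕ → Bool)
    {g : (ℕ → Bool) × (ℕ → Bool) → ℝ≥0∞} (hg : Measurable g) :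
    ∫⁻ x, g x ∂condProdLaw μ ν p q a b =
      ∫⁻ i, ∫⁻ s, ∫⁻ t, g (s, t) ∂condDistrib b q ν i ∂condDistrib a p μ i ∂(μ.map p) := by
  rw [condProdLaw, Measure.lintegral_bind (Kernel.aemeasurable _) hg.aemeasurable]
  simp_rw [Kernel.lintegral_prod _ _ _ hg]

lemma lintegral_condProdLaw_le [DiscreteMeasurableSpace I]
    (hpq : μ.map p = ν.map q) {a : E → ℕ → Bool} {b : F → ℕ → Bool} (ha : Measurable a)
    (hb : Measurable b) {g : (ℕ → Bool) × (ℕ → Bool) → ℝ≥0∞} (hg : Measurable g)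
    {c₁ : E → ℝ≥0∞} {c₂ : F → ℝ≥0∞} (h : ∀ e f, p e = q f → g (a e, b f) ≤ c₁ e + c₂ f) :
    ∫⁻ x, g x ∂condProdLaw μ ν p q a b ≤ ∫⁻ e, c₁ e ∂μ + ∫⁻ f, c₂ f ∂ν := by
  rw [lintegral_condProdLaw a b hg]
  refine le_trans ?_ (add_le_add (lintegral_condDistrib_iInf_le (p := p) ha c₁)
    (lintegral_condDistrib_iInf_le (p := q) hb c₂))
  rw [← hpq, ← lintegral_add_left (.of_discrete)]
  refine lintegral_mono fun i ↦ ?_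
  set h₁ : (ℕ → Bool) → ℝ≥0∞ := fun s ↦ ⨅ (e) (_ : p e = i ∧ a e = s), c₁ e with hh₁
  set h₂ : (ℕ → Bool) → ℝ≥0∞ := fun t ↦ ⨅ (f) (_ : q f = i ∧ b f = t), c₂ f with hh₂
  have hle (s t) : g (s, t) ≤ h₁ s + h₂ t := by
    simp only [hh₁, hh₂, ENNReal.iInf_add, ENNReal.add_iInf]
    refine le_iInf₂ fun f hf ↦ le_iInf₂ fun e he ↦ ?_
    obtain ⟨rfl, rfl⟩ := he
    obtain ⟨hf, rfl⟩ := hf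
    exact h e f hf.symm
  calc ∫⁻ s, ∫⁻ t, g (s, t) ∂condDistrib b q ν i ∂condDistrib a p μ i
      ≤ ∫⁻ s, (h₁ s + ∫⁻ t, h₂ t ∂condDistrib b q ν i) ∂condDistrib a p μ i := by
        refine lintegral_mono fun s ↦ (lintegral_mono (hle s)).trans ?_
        rw [lintegral_add_left measurable_const]
        simp
    _ = ∫⁻ s, h₁ s ∂condDistrib a p μ i + ∫⁻ t, h₂ t ∂condDistrib b q ν i := by
        rw [lintegral_add_right _ measurable_const]
        simp

lemma condProdLaw_comp (hpq : μ.map p = ν.map q) {a : E → ℕ → Bool} {b : F → ℕ → Bool}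
    (ha : Measurable a) (hb : Measurable b) {r : (ℕ → Bool) → (ℕ → Bool)} (hr : Measurable r) :
    condProdLaw μ ν p q (r ∘ a) (r ∘ b) = (condProdLaw μ ν p q a b).map (Prod.map r r) := by
  refine Measure.ext_of_lintegral _ fun g hg ↦ ?_
  rw [lintegral_map hg (hr.prodMap hr), lintegral_condProdLaw _ _ hg,
    lintegral_condProdLaw _ _ (g := fun x ↦ g (Prod.map r r x)) (hg.comp (hr.prodMap hr))]
  refine lintegral_congr_ae ?_
  have ha' : condDistrib (r ∘ a) p μ =ᵐ[μ.map p] (condDistrib a p μ).map r :=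
    condDistrib_comp p ha.aemeasurable hr
  have hb' : condDistrib (r ∘ b) q ν =ᵐ[ν.map q] (condDistrib b q ν).map r :=
    condDistrib_comp q hb.aemeasurable hr
  rw [← hpq] at hb'
  filter_upwards [ha', hb'] with i hi hi'
  rw [hi, hi', Kernel.map_apply _ hr, Kernel.map_apply _ hr,
    lintegral_map hg.lintegral_prod_right' hr]
  refine lintegral_congr fun s ↦ ?_
  exact lintegral_map (hg.comp measurable_prodMk_left) hr

lemma condProdLaw_map_fst (hp : Measurable p) {a : E → ℕ → Bool} (ha : Measurable a)
    (b : F → ℕ → Bool) : (condProdLaw μ ν p q a b).map Prod.fst = μ.map a := by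
  refine Measure.ext_of_lintegral _ fun g hg ↦ ?_
  rw [lintegral_map hg measurable_fst,
    lintegral_condProdLaw _ _ (g := fun x ↦ g x.1) (hg.comp measurable_fst),
    ← condDistrib_comp_map hp.aemeasurable ha.aemeasurable,
    Measure.lintegral_bind (Kernel.aemeasurable _) hg.aemeasurable]
  simp

lemma condProdLaw_map_snd (hq : Measurable q) (hpq : μ.map p = ν.map q) (a : E → ℕ → Bool)
    {b : F → ℕ → Bool} (hb : Measurable b) :
    (condProdLaw μ ν p q a b).map Prod.snd = ν.map b := by
  refine Measure.ext_of_lintegral _ fun g hg ↦ ?_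
  rw [lintegral_map hg measurable_snd,
    lintegral_condProdLaw _ _ (g := fun x ↦ g x.2) (hg.comp measurable_snd),
    ← condDistrib_comp_map hq.aemeasurable hb.aemeasurable,
    Measure.lintegral_bind (Kernel.aemeasurable _) hg.aemeasurable, hpq]
  simp

/-- Measures are determined by their images in the Cantor space. -/
lemma Measure.ext_of_map_cantor {μ₁ μ₂ : Measure E}
    (h : ∀ a : E → ℕ → Bool, Measurable a → μ₁.map a = μ₂.map a) : μ₁ = μ₂ := by
  classical
  ext A hA
  have ha := measurable_cantorIndicator hA
  have hN : MeasurableSet {s : ℕ → Bool | s 0 = true} :=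
    measurableSet_eq_fun (measurable_pi_apply 0) measurable_const
  have := congrArg (fun m ↦ m {s | s 0 = true}) (h _ ha)
  simpa [Measure.map_apply ha hN, preimage] using this

/-- **Relative product over a discrete measurable space.** Without any regularity of `E` and `F`,
two measures with the same image in a discrete measurable space can be glued along it. The gluing
need not charge only `{(e, f) | p e = q f}`, which may be non-measurable, but lower integrals behave
as if it did. -/
theorem exists_relativeProduct [DiscreteMeasurableSpace I] (hp : Measurable p) (hq : Measurable q)
    (hpq : μ.map p = ν.map q) :
    ∃ Γ : Measure (E × F), Γ.map Prod.fst = μ ∧ Γ.map Prod.snd = ν ∧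
      ∀ (c : E × F → ℝ≥0∞) (c₁ : E → ℝ≥0∞) (c₂ : F → ℝ≥0∞),
        (∀ e f, p e = q f → c (e, f) ≤ c₁ e + c₂ f) →
        ∫⁻ x, c x ∂Γ ≤ ∫⁻ e, c₁ e ∂μ + ∫⁻ f, c₂ f ∂ν := by
  obtain ⟨Γ, hΓ⟩ := exists_measure_map_eq_of_compatible (condProdLaw μ ν p q)
    (fun a b ha hb r hr ↦ condProdLaw_comp hpq ha hb hr) (fun a b ha hb N hN hempty ↦ by
      rw [← lintegral_indicator_one hN, ← nonpos_iff_eq_zero]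
      refine (lintegral_condProdLaw_le hpq ha hb (measurable_one.indicator hN)
        (c₁ := 0) (c₂ := 0) fun e f _ ↦ ?_).trans (by simp)
      have : (a e, b f) ∉ N := fun hmem ↦ (hempty.le (show (e, f) ∈ Prod.map a b ⁻¹' N from hmem))
      simp [this])
  refine ⟨Γ, Measure.ext_of_map_cantor fun a ha ↦ ?_, Measure.ext_of_map_cantor fun b hb ↦ ?_,
    fun c c₁ c₂ h ↦ ?_⟩
  · have hb : Measurable fun (_ : F) (_ : ℕ) ↦ false := measurable_const
    rw [← condProdLaw_map_fst (μ := μ) (ν := ν) (q := q) hp ha (fun _ _ ↦ false), ← hΓ _ _ ha hb,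
      Measure.map_map ha measurable_fst, Measure.map_map measurable_fst (ha.prodMap hb)]
    rfl
  · have ha : Measurable fun (_ : E) (_ : ℕ) ↦ false := measurable_const
    rw [← condProdLaw_map_snd (μ := μ) (ν := ν) (p := p) hq hpq (fun _ _ ↦ false) hb,
      ← hΓ _ _ ha hb, Measure.map_map hb measurable_snd,
      Measure.map_map measurable_snd (ha.prodMap hb)]
    rfl
  · obtain ⟨g, hg, hgc, hgeq⟩ := exists_measurable_le_lintegral_eq Γ c
    obtain ⟨a, b, g', ha, hb, hg', rfl⟩ := hg.exists_eq_comp_prodMap_cantor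
    rw [hgeq]
    simp only [Function.comp_apply]
    rw [← lintegral_map hg' (ha.prodMap hb), hΓ _ _ ha hb]
    exact lintegral_condProdLaw_le hpq ha hb hg' fun e f hef ↦
      (hgc (e, f)).trans (h e f hef)

end RelativeProduct

/-- A metric space has a partition into pieces of small diameter, all of whose unions are Borel. -/
lemma exists_small_partition (X : Type*) [MeasurableSpace X] [PseudoEMetricSpace X] [BorelSpace X]
    {ε : ℝ≥0∞} (hε : 0 < ε) :
    ∃ idx : X → X, (∀ S, MeasurableSet (idx ⁻¹' S)) ∧ ∀ x, edist x (idx x) ≤ ε := by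
  obtain ⟨V, hVo, hVc, hVf, hVs⟩ := precise_refinement (fun x : X ↦ Metric.eball x ε)
    (fun x ↦ Metric.isOpen_eball) (iUnion_eq_univ_iff.2 fun x ↦ ⟨x, Metric.mem_eball_self hε⟩)
  have hne (x : X) : {i | x ∈ V i}.Nonempty := iUnion_eq_univ_iff.1 hVc x
  have hwf : WellFounded (WellOrderingRel : X → X → Prop) := IsWellFounded.wf
  refine ⟨fun x ↦ hwf.min _ (hne x), fun S ↦ ?_, fun x ↦ ?_⟩
  · choose G hGc hGs hGu _ using fun i ↦ (hVo i).exists_iUnion_isClosed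
    have heq : (fun x ↦ hwf.min _ (hne x)) ⁻¹' S =
        ⋃ n, ⋃ i, {x | i ∈ S ∧ x ∈ G i n ∧ ∀ j, WellOrderingRel j i → x ∉ V j} := by
      ext x
      simp only [mem_preimage, mem_iUnion, mem_ofPred_eq]
      constructor
      · intro hx
        have hmem : x ∈ ⋃ n, G (hwf.min _ (hne x)) n := by
          rw [hGu]; exact hwf.min_mem _ (hne x)
        obtain ⟨n, hn⟩ := mem_iUnion.1 hmem
        exact ⟨n, _, hx, hn, fun j hj hxj ↦ hwf.not_lt_min {i | x ∈ V i} hxj hj⟩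
      · rintro ⟨n, i, hi, hx, hlt⟩
        convert hi
        have h1 := hwf.not_lt_min {i | x ∈ V i} (hGs i n hx)
        rcases trichotomous_of WellOrderingRel (hwf.min _ (hne x)) i with h | h | h
        · exact absurd (hwf.min_mem _ (hne x)) (hlt _ h)
        · exact h
        · exact absurd h h1
    rw [heq]
    refine .iUnion fun n ↦ IsClosed.measurableSet (LocallyFinite.isClosed_iUnion ?_ fun i ↦ ?_)
    · exact hVf.subset fun i x hx ↦ hGs i n hx.2.1
    · by_cases hi : i ∈ S
      · have : {x | i ∈ S ∧ x ∈ G i n ∧ ∀ j, WellOrderingRel j i → x ∉ V j} =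
            G i n ∩ ⋂ j, ⋂ (_ : WellOrderingRel j i), (V j)ᶜ := by
          ext x; simp [hi]
        rw [this]
        exact (hGc i n).inter (isClosed_iInter fun j ↦ isClosed_iInter fun _ ↦
          (hVo j).isClosed_compl)
      · simp [hi]
  · exact (hVs _ (hwf.min_mem _ (hne x))).le

lemma W1_le_lintegral_edist {X : Type*} [MeasurableSpace X] [PseudoEMetricSpace X]
    {P Q : Measure X} (π : Measure (X × X)) (hπ : IsProbabilityMeasure π)
    (h₁ : π.map Prod.fst = P) (h₂ : π.map Prod.snd = Q) : W1 P Q ≤ ∫⁻ x, edist x.1 x.2 ∂π :=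
  iInf₂_le π ⟨hπ, h₁, h₂⟩

lemma W1_triangle {X : Type*} [MeasurableSpace X] [PseudoEMetricSpace X] [BorelSpace X]
    (P Q R : Measure X) : W1 P R ≤ W1 P Q + W1 Q R := by
  refine ENNReal.le_of_forall_pos_le_add fun ε hε _ ↦ ?_
  have hε2 : (0 : ℝ≥0∞) < ε / 2 := ENNReal.half_pos (by simpa using hε.ne')
  obtain ⟨idx, hidx, hdist⟩ := exists_small_partition X hε2
  rw [W1.eq_1 P Q, W1.eq_1 Q R]
  simp only [ENNReal.iInf_add, ENNReal.add_iInf]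
  refine le_iInf₂ fun π₂ h₂ ↦ le_iInf₂ fun π₁ h₁ ↦ ?_
  obtain ⟨hπ₁, hP, hQ₁⟩ := h₁
  obtain ⟨hπ₂, hQ₂, hR⟩ := h₂
  have hidx' : @Measurable X X _ ⊤ idx := fun S _ ↦ hidx S
  obtain ⟨Γ, hΓ₁, hΓ₂, hΓ⟩ := @exists_relativeProduct (X × X) (X × X) X _ _ ⊤ π₁ π₂ _ _
    (fun x ↦ idx x.2) (fun x ↦ idx x.1) (@DiscreteMeasurableSpace.mk X ⊤ fun _ ↦ trivial)
    (@Measurable.comp _ _ _ _ _ ⊤ _ _ hidx' measurable_snd)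
    (@Measurable.comp _ _ _ _ _ ⊤ _ _ hidx' measurable_fst) (by
      have e₁ := @Measure.map_map _ _ _ _ _ ⊤ π₁ _ _ hidx' measurable_snd
      have e₂ := @Measure.map_map _ _ _ _ _ ⊤ π₂ _ _ hidx' measurable_fst
      rw [hQ₁] at e₁
      rw [hQ₂] at e₂
      exact e₁.symm.trans e₂)
  have hm : Measurable fun x : (X × X) × (X × X) ↦ (x.1.1, x.2.2) := by fun_prop
  have hΓp : IsProbabilityMeasure Γ := by
    refine ⟨?_⟩
    have := hπ₁.measure_univ
    rwa [← hΓ₁, Measure.map_apply measurable_fst .univ, preimage_univ] at this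
  refine (W1_le_lintegral_edist (Γ.map fun x ↦ (x.1.1, x.2.2)) ?_ ?_ ?_).trans ?_
  · exact Measure.isProbabilityMeasure_map hm.aemeasurable
  · rw [Measure.map_map measurable_fst hm, ← hP, ← hΓ₁, Measure.map_map measurable_fst
      measurable_fst]
    rfl
  · rw [Measure.map_map measurable_snd hm, ← hR, ← hΓ₂, Measure.map_map measurable_snd
      measurable_snd]
    rfl
  refine (lintegral_map_le _ _).trans ((hΓ _ (fun x ↦ edist x.1 x.2 + ε)
    (fun x ↦ edist x.1 x.2) fun x y hxy ↦ ?_).trans ?_)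
  · calc edist x.1 y.2 ≤ edist x.1 x.2 + edist x.2 y.1 + edist y.1 y.2 :=
          (edist_triangle _ y.1 _).trans (by gcongr; exact edist_triangle _ _ _)
      _ ≤ edist x.1 x.2 + ε + edist y.1 y.2 := by
          gcongr
          calc edist x.2 y.1 ≤ edist x.2 (idx x.2) + edist (idx x.2) y.1 := edist_triangle _ _ _
            _ ≤ ε / 2 + ε / 2 := by
              gcongr
              · exact hdist _
              · rw [hxy, edist_comm]; exact hdist _
            _ = ε := ENNReal.add_halves _
  · rw [lintegral_add_right _ measurable_const]
    simp only [lintegral_const, measure_univ, mul_one]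
    rw [add_right_comm]

lemma W1_comm {X : Type*} [MeasurableSpace X] [PseudoEMetricSpace X] (P Q : Measure X) :
    W1 P Q = W1 Q P := by
  have hle (P Q : Measure X) : W1 P Q ≤ W1 Q P := by
    refine le_iInf₂ fun π ⟨hπ, h₁, h₂⟩ ↦ (W1_le_lintegral_edist (π.map Prod.swap)
      (Measure.isProbabilityMeasure_map measurable_swap.aemeasurable) ?_ ?_).trans
        ((lintegral_map_le _ _).trans (lintegral_mono fun x ↦ (edist_comm _ _).le))
    · rw [Measure.map_map measurable_fst measurable_swap, ← h₂]; rfl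
    · rw [Measure.map_map measurable_snd measurable_swap, ← h₁]; rfl
  exact (hle P Q).antisymm (hle Q P)

lemma W1_mixture_le {X : Type*} [MeasurableSpace X] [PseudoEMetricSpace X] (P Q : Measure X)
    [IsProbabilityMeasure P] {s t : ℝ≥0∞} (hs0 : s ≠ 0) (hst : s + t = 1) :
    W1 (s • Q + t • P) P ≤ s * W1 Q P := by
  have hs : s ≠ ∞ := ne_top_of_le_ne_top one_ne_top (hst ▸ le_self_add)
  rw [W1.eq_1 Q P]
  simp only [ENNReal.mul_iInf_of_ne hs0 hs]
  refine le_iInf₂ fun π ⟨hπ, h₁, h₂⟩ ↦ ?_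
  have hd : Measurable fun x : X ↦ (x, x) := by fun_prop
  have hmap (f : X × X → X) (hf : Measurable f) (hfd : ∀ x, f (x, x) = x) :
      (P.map fun x ↦ (x, x)).map f = P := by
    rw [Measure.map_map hf hd]
    simp [Function.comp_def, hfd]
  refine (W1_le_lintegral_edist (s • π + t • P.map fun x ↦ (x, x)) ⟨?_⟩ ?_ ?_).trans ?_
  · simp [Measure.map_apply hd .univ, hst]
  · rw [Measure.map_add _ _ measurable_fst, Measure.map_smul, Measure.map_smul, h₁,
      hmap _ measurable_fst fun _ ↦ rfl]
  · rw [Measure.map_add _ _ measurable_snd, Measure.map_smul, Measure.map_smul, h₂,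
      hmap _ measurable_snd fun _ ↦ rfl, ← add_smul, hst, one_smul]
  · rw [lintegral_add_measure, lintegral_smul_measure, lintegral_smul_measure]
    have : ∫⁻ x, edist x.1 x.2 ∂(P.map fun x ↦ (x, x)) = 0 :=
      nonpos_iff_eq_zero.1 ((lintegral_map_le _ _).trans (by simp))
    simp [this]

end Gluing

/-- If `W₁(Q, P) > ρ > 0` and `Q' = (1 - u)·Q + u·P` with `u = 1 - ρ / W₁(Q, P)`,
then `W₁(Q', P) = ρ` and `W₁(Q', Q) = W₁(Q, P) - ρ`. -/
theorem stmt17 {X : Type*} [MeasurableSpace X] [MetricSpace X] [BorelSpace X]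
    (P Q : Measure X) [IsProbabilityMeasure P] [IsProbabilityMeasure Q]
    (ρ : ℝ) (hρ : 0 < ρ) (hfin : W1 Q P ≠ ⊤) (hgt : ENNReal.ofReal ρ < W1 Q P)
    (u : ℝ) (hu : u = 1 - ρ / (W1 Q P).toReal) :
    W1 (ENNReal.ofReal (1 - u) • Q + ENNReal.ofReal u • P) P = ENNReal.ofReal ρ ∧
    W1 (ENNReal.ofReal (1 - u) • Q + ENNReal.ofReal u • P) Q
      = W1 Q P - ENNReal.ofReal ρ := by
  set w := (W1 Q P).toReal with hw
  have hwW : W1 Q P = ENNReal.ofReal w := (ENNReal.ofReal_toReal hfin).symm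
  have hρw : ρ < w := (ENNReal.ofReal_lt_iff_lt_toReal hρ.le hfin).1 hgt
  have hw0 : 0 < w := hρ.trans hρw
  have hu1 : 1 - u = ρ / w := by rw [hu]; ring
  have h1u : 0 < 1 - u := by rw [hu1]; positivity
  have hu0 : 0 < u := by
    rw [hu, sub_pos, div_lt_one hw0]; exact hρw
  have hsum : ENNReal.ofReal (1 - u) + ENNReal.ofReal u = 1 := by
    rw [← ENNReal.ofReal_add h1u.le hu0.le]; simp
  set Q' := ENNReal.ofReal (1 - u) • Q + ENNReal.ofReal u • P with hQ'
  have hP : W1 Q' P ≤ ENNReal.ofReal ρ := by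
    refine (W1_mixture_le P Q (by simpa using h1u) hsum).trans_eq ?_
    rw [hwW, ← ENNReal.ofReal_mul h1u.le, hu1, div_mul_cancel₀ _ hw0.ne']
  have hQ : W1 Q' Q ≤ W1 Q P - ENNReal.ofReal ρ := by
    rw [hQ', add_comm]
    refine (W1_mixture_le Q P (by simpa using hu0) ((add_comm _ _).trans hsum)).trans_eq ?_
    rw [W1_comm P Q, hwW, ← ENNReal.ofReal_mul hu0.le, ← ENNReal.ofReal_sub _ hρ.le, hu, sub_mul,
      one_mul, div_mul_cancel₀ _ hw0.ne']
  have htri : W1 Q P ≤ W1 Q' Q + W1 Q' P := W1_comm Q Q' ▸ W1_triangle Q Q' P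
  refine ⟨hP.antisymm ?_, hQ.antisymm ?_⟩
  · have hle : W1 Q P - ENNReal.ofReal ρ + ENNReal.ofReal ρ ≤
        W1 Q P - ENNReal.ofReal ρ + W1 Q' P := by
      rw [tsub_add_cancel_of_le hgt.le]
      exact htri.trans (by gcongr)
    exact (ENNReal.add_le_add_iff_left (ne_top_of_le_ne_top hfin tsub_le_self)).1 hle
  · exact tsub_le_iff_right.2 (htri.trans (by gcongr))
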